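/- Fix an integer n ≥ 1. For θ > 0 let negbin_{n,θ}(x) := C(x+n−1, x) (n/(n+θ))^n (θ/(n+θ))^x for x ∈ ℕ denote the negative binomial probability mass function with n successes parameterized by its mean θ, and let poi(θ, x) := exp(−θ) θ^x / x! denote the Poisson probability mass function with mean θ. Then for all μ, μ' > 0: Σ_{x ∈ ℕ} negbin_{n,μ'}(x) · poi(μ, x)/negbin_{n,μ}(x) ≤ 1. That is, the likelihood ratio between the Poisson(μ) alternative and the mean-matched negative binomial negbin_{n,μ} is an e-variable for the entire negative binomial null hypothesis {negbin_{n,μ'} : μ' > 0}. -/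

import Mathlib

/-!
The product of the null mass function at `μ'` with the likelihood ratio is a multiple of a Poisson
weight. With `r = (n + μ) / (n + μ')` it equals `r ^ n * exp (-μ) * (μ' * r) ^ x / x !`, since the
binomial coefficients cancel. Summing the exponential series and using `μ' * r - μ = n * (1 - r)`,
the expectation is `(r * exp (1 - r)) ^ n`, which is at most `1` because `r ≤ exp (r - 1)`.
-/

open Real

/-- The Poisson probability mass function with mean `θ` evaluated at `x`. -/
noncomputable def poi (θ : ℝ) (x : ℕ) : ℝ :=
  Real.exp (-θ) * θ ^ x / (Nat.factorial x : ℝ)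

/-- The negative binomial probability mass function with `n` successes, parameterized by
its mean `θ`: `negbin n θ x = C(x+n−1, x) (n/(n+θ))^n (θ/(n+θ))^x`. -/
noncomputable def negbin (n : ℕ) (θ : ℝ) (x : ℕ) : ℝ :=
  (Nat.choose (x + n - 1) x : ℝ) * ((n : ℝ) / ((n : ℝ) + θ)) ^ n * (θ / ((n : ℝ) + θ)) ^ x

/-- The summand is a constant times a term of the exponential series at `μ' * (n + μ) / (n + μ')`. -/
lemma negbin_mul_ratio_eq (n : ℕ) (hn : 1 ≤ n) (μ μ' : ℝ) (hμ : 0 < μ) (hμ' : 0 < μ') (x : ℕ) :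
    negbin n μ' x * (poi μ x / negbin n μ x) =
      (((n : ℝ) + μ) / (n + μ')) ^ n * Real.exp (-μ) *
        ((μ' * (((n : ℝ) + μ) / (n + μ'))) ^ x / (Nat.factorial x : ℝ)) := by
  have hn0 : (n : ℝ) ≠ 0 := by exact_mod_cast (by omega : n ≠ 0)
  have h1 : (n : ℝ) + μ ≠ 0 := by positivity
  have h2 : (n : ℝ) + μ' ≠ 0 := by positivity
  have hc : (Nat.choose (x + n - 1) x : ℝ) ≠ 0 := by
    exact_mod_cast (Nat.choose_pos (by omega)).ne'
  have hf : (Nat.factorial x : ℝ) ≠ 0 := by positivity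
  unfold negbin poi
  simp only [div_pow, mul_pow]
  field_simp

/-- the likelihood ratio between the `Poisson(μ)` alternative and the
mean-matched negative binomial `negbin(n, μ)` has expectation at most `1` under every
negative binomial `negbin(n, μ')`, i.e. it is an e-variable for the entire negative
binomial null hypothesis `{negbin(n, μ') : μ' > 0}`. -/
theorem poisson_vs_negbin_simple_evariable
    (n : ℕ) (hn : 1 ≤ n) (μ μ' : ℝ) (hμ : 0 < μ) (hμ' : 0 < μ') :
    ∑' x : ℕ, negbin n μ' x * (poi μ x / negbin n μ x) ≤ 1 := by
  set r : ℝ := ((n : ℝ) + μ) / (n + μ') with hr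
  have hr0 : 0 < r := by positivity
  have hexp : μ' * r - μ = n * (1 - r) := by
    rw [hr]
    field_simp
    ring
  have hle : r * Real.exp (1 - r) ≤ 1 := by
    have h := Real.add_one_le_exp (r - 1)
    calc r * Real.exp (1 - r) ≤ Real.exp (r - 1) * Real.exp (1 - r) := by
          gcongr
          linarith
      _ = 1 := by
          rw [← Real.exp_add]
          simp
  have hsum : ∑' x : ℕ, (μ' * r) ^ x / (Nat.factorial x : ℝ) = Real.exp (μ' * r) := by
    rw [Real.exp_eq_exp_ℝ, NormedSpace.exp_eq_tsum_div]
  calc ∑' x : ℕ, negbin n μ' x * (poi μ x / negbin n μ x)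
      = ∑' x : ℕ, r ^ n * Real.exp (-μ) * ((μ' * r) ^ x / (Nat.factorial x : ℝ)) :=
        tsum_congr fun x => negbin_mul_ratio_eq n hn μ μ' hμ hμ' x
    _ = r ^ n * Real.exp (μ' * r - μ) := by
        rw [tsum_mul_left, hsum, mul_assoc, ← Real.exp_add]
        ring_nf
    _ = (r * Real.exp (1 - r)) ^ n := by
        rw [hexp, Real.exp_nat_mul, mul_pow]
    _ ≤ 1 := pow_le_one₀ (by positivity) hle
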